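/- arXiv:2106.10166 — 2 statements merged into one kernel-verified Lean document; each statement's English description precedes it below -/
import Mathlib

section
/- For every integer K ≥ 3 and every integer T with T > 36·log(K) there exists a fixed-budget strategy π with horizon T (the PD-MTB algorithm, which uses no knowledge of σ or of the gaps) such that for every σ > 0 and every σ²-sub-Gaussian K-armed bandit problem ν whose means (μ_k)_{k=1}^K form a nondecreasing sequence, the probability of error satisfies e_T^{ν,π} ≤ exp(−(1/48)·T·Δ_min²/σ² + 12·log(K)), where Δ_min = min_{k∈[K]} |μ_k − τ|. -/
open MeasureTheory

/-- Law of the history `(Y_1, …, Y_n)` of a fixed-budget strategy: at round `t + 1`, given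
the past history `h : Fin t → ℝ`, the sampling rule `π` selects the arm `π t h` and the
observation is drawn from `ν (π t h)` (sequential / Ionescu–Tulcea composition). -/
noncomputable def histMeasure {K : ℕ} (ν : Fin K → Measure ℝ)
    (π : (t : ℕ) → (Fin t → ℝ) → Fin K) : (n : ℕ) → Measure (Fin n → ℝ)
  | 0 => Measure.dirac (fun i => Fin.elim0 i)
  | n + 1 => (histMeasure ν π n).bind (fun h => (ν (π n h)).map (Fin.snoc h))

/-- The error event: some arm is misclassified. `Qhat y k = true` encodes the label `+1`
(i.e. the prediction that `μ k ≥ τ`), `false` encodes the label `-1`. -/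
def errSet {K T : ℕ} (Qhat : (Fin T → ℝ) → Fin K → Bool) (μ : Fin K → ℝ) (τ : ℝ) :
    Set (Fin T → ℝ) :=
  {y | ∃ k, (Qhat y k = true) ≠ (τ ≤ μ k)}

/-- A distribution `ν` with mean `m` is `σ2`-sub-Gaussian if
`∫ exp (t (x − m)) dν(x) ≤ exp (σ2 t² / 2)` for all `t : ℝ`. -/
def IsSubGaussianArm (σ2 : ℝ) (m : ℝ) (ν : Measure ℝ) : Prop :=
  ∀ t : ℝ, ∫⁻ x, ENNReal.ofReal (Real.exp (t * (x - m))) ∂ν ≤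
    ENNReal.ofReal (Real.exp (σ2 * t ^ 2 / 2))

/-!
With monotone labels, classifying the `K` arms means finding a threshold among `K + 1` positions,
which is done by a noisy binary search with multiplicative weights. In each of `n ≈ 9 log K` phases
the two arms next to the weighted median position are sampled `m` times each; the signs of the two
centred sums tell on which side of the median the threshold lies, and the weight of every position
that disagrees is divided by `4`. If both signs are right, the odds against the true threshold
shrink by `5 / 8`; otherwise they grow by at most `4 = (5 / 8) * (32 / 5)`.

A wrong sign after `m` samples forces the exponential evidence against the right sign to be at least
`exp (m * κ)`, where `κ = Δ ^ 2 / (2 * σ ^ 2)` comes from the sub-Gaussian bound, while its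
expectation stays at most `1`. Choosing `s` with `(32 / 5) ^ s = exp (m * κ)` therefore makes one
phase multiply the expected `s`-th power of the odds by at most `(1 + 1 + 1) * (5 / 8) ^ s`. The
final median is wrong only if the odds are at least `1`, so the error probability is at most
`(3 * (5 / 8) ^ s) ^ n * K ^ s`.
-/

open scoped ENNReal

namespace MonotoneBandit

section History

variable {K : ℕ} {ν : Fin K → Measure ℝ} {π : (t : ℕ) → (Fin t → ℝ) → Fin K}
  {V : (t : ℕ) → (Fin t → ℝ) → ℝ≥0∞}

theorem lintegral_histMeasure_le_of_supermartingale
    (hV : ∀ t h, ∫⁻ y, V (t + 1) (Fin.snoc h y) ∂ν (π t h) ≤ V t h) (T : ℕ) :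
    ∫⁻ h, V T h ∂histMeasure ν π T ≤ V 0 Fin.elim0 := by
  induction T with
  | zero => exact (lintegral_dirac _ _).le
  | succ t ih =>
    calc ∫⁻ h, V (t + 1) h ∂histMeasure ν π (t + 1)
      _ ≤ ∫⁻ h, ∫⁻ h', V (t + 1) h' ∂(ν (π t h)).map (Fin.snoc h) ∂histMeasure ν π t :=
        Measure.lintegral_bind_le _ _ _
      _ ≤ ∫⁻ h, V t h ∂histMeasure ν π t :=
        lintegral_mono fun h ↦ (lintegral_map_le _ _).trans (hV t h)
      _ ≤ V 0 Fin.elim0 := ih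

theorem histMeasure_le_of_supermartingale
    (hV : ∀ t h, ∫⁻ y, V (t + 1) (Fin.snoc h y) ∂ν (π t h) ≤ V t h) {T : ℕ}
    {A : Set (Fin T → ℝ)} (hA : MeasurableSet A) (hVA : ∀ h ∈ A, 1 ≤ V T h) :
    histMeasure ν π T A ≤ V 0 Fin.elim0 :=
  calc histMeasure ν π T A = ∫⁻ h, A.indicator 1 h ∂histMeasure ν π T :=
        (lintegral_indicator_one hA).symm
    _ ≤ ∫⁻ h, V T h ∂histMeasure ν π T :=
        lintegral_mono (Set.indicator_le hVA)
    _ ≤ V 0 Fin.elim0 := lintegral_histMeasure_le_of_supermartingale hV T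

theorem measurableSet_errSet {T : ℕ} {Qhat : (Fin T → ℝ) → Fin K → Bool} (hQ : Measurable Qhat)
    (μ : Fin K → ℝ) (τ : ℝ) : MeasurableSet (errSet Qhat μ τ) :=
  hQ (Set.toFinite {q : Fin K → Bool | ∃ k, (q k = true) ≠ (τ ≤ μ k)}).measurableSet

end History

section StateMachine

variable {S Y : Type*}

/-- The state reached from `s₀` after reading the observations `h 0, …, h (t - 1)`, where `step i`
processes the observation of round `i`. Strategies with a bounded memory are functions of it. -/
def stateAfter (step : ℕ → S → Y → S) (s₀ : S) (t : ℕ) (h : Fin t → Y) : S :=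
  Fin.foldl t (fun s i ↦ step i s (h i)) s₀

theorem stateAfter_succ (step : ℕ → S → Y → S) (s₀ : S) (t : ℕ) (h : Fin (t + 1) → Y) :
    stateAfter step s₀ (t + 1) h = step t (stateAfter step s₀ t (Fin.init h)) (h (Fin.last t)) :=
  Fin.foldl_succ_last _ _

theorem stateAfter_snoc (step : ℕ → S → Y → S) (s₀ : S) (t : ℕ) (h : Fin t → Y) (y : Y) :
    stateAfter step s₀ (t + 1) (Fin.snoc h y) = step t (stateAfter step s₀ t h) y := by
  rw [stateAfter_succ, Fin.init_snoc, Fin.snoc_last]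

theorem measurable_stateAfter [MeasurableSpace S] [MeasurableSpace Y] {step : ℕ → S → Y → S}
    (hstep : ∀ t, Measurable fun p : S × Y ↦ step t p.1 p.2) (s₀ : S) (t : ℕ) :
    Measurable (stateAfter step s₀ t) := by
  induction t with
  | zero => exact measurable_const
  | succ t ih =>
    rw [funext (stateAfter_succ step s₀ t)]
    exact (hstep t).comp ((ih.comp (by unfold Fin.init; fun_prop)).prodMk (measurable_pi_apply _))

end StateMachine

section WeightedMajority

theorem exists_weighted_median {ι M : Type*} [LinearOrder ι] [Fintype ι] [Nonempty ι]
    [AddCommMonoid M] [LinearOrder M] [IsOrderedAddMonoid M] {w : ι → M} (hw : ∀ j, 0 ≤ w j) :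
    ∃ m, ∑ j with j < m, w j ≤ ∑ j with m ≤ j, w j ∧ ∑ j with m < j, w j ≤ ∑ j with j ≤ m, w j := by
  let s : Finset ι := {m | ∑ j with m < j, w j ≤ ∑ j with j ≤ m, w j}
  have hs : s.Nonempty := by
    refine ⟨Finset.univ.max' Finset.univ_nonempty, Finset.mem_filter_univ _ |>.2 ?_⟩
    rw [Finset.filter_false_of_mem fun j _ ↦ (Finset.le_max' _ j (Finset.mem_univ j)).not_gt]
    exact Finset.sum_nonneg fun j _ ↦ hw j
  refine ⟨s.min' hs, ?_, (Finset.mem_filter.1 (s.min'_mem hs)).2⟩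
  set m := s.min' hs
  obtain hbelow | hbelow := (Finset.univ.filter (· < m)).eq_empty_or_nonempty
  · rw [hbelow]
    exact Finset.sum_nonneg fun j _ ↦ hw j
  · set p := (Finset.univ.filter (· < m)).max' hbelow
    have hpm : p < m := (Finset.mem_filter.1 (Finset.max'_mem _ hbelow)).2
    have hlt (j : ι) : j < m ↔ j ≤ p :=
      ⟨fun h ↦ Finset.le_max' _ j (Finset.mem_filter_univ _ |>.2 h), fun h ↦ h.trans_lt hpm⟩
    have hle (j : ι) : m ≤ j ↔ p < j := by rw [← not_lt, hlt, not_le]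
    have hps : p ∉ s := fun h ↦ (s.min'_le p h).not_gt hpm
    simp only [hlt, hle]
    exact (not_le.1 fun h ↦ hps (Finset.mem_filter_univ _ |>.2 h)).le

variable {ι : Type*}

/-- The weight of the hypothesis `j` when `v j` is the number of votes cast against it. -/
noncomputable def weight (v : ι → ℕ) (j : ι) : ℝ := (1 / 4) ^ v j

theorem weight_pos (v : ι → ℕ) (j : ι) : 0 < weight v j := by unfold weight; positivity

variable [LinearOrder ι] [Fintype ι]

/-- A weighted median of the hypotheses under `weight v`. -/
noncomputable def median [Nonempty ι] (v : ι → ℕ) : ι :=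
  (exists_weighted_median fun j ↦ (weight_pos v j).le).choose

/-- The vote counts after one more vote `o`, which compares the true hypothesis with the median:
it counts against every hypothesis that lies in a different direction from the median. -/
noncomputable def vote [Nonempty ι] (v : ι → ℕ) (o : Ordering) (j : ι) : ℕ :=
  v j + if cmp j (median v) = o then 0 else 1

/-- The odds against the hypothesis `j₀`: the weight of all others relative to its own. -/
noncomputable def oddsAgainst (j₀ : ι) (v : ι → ℕ) : ℝ :=
  (∑ j ∈ Finset.univ.erase j₀, weight v j) / weight v j₀

theorem oddsAgainst_nonneg (j₀ : ι) (v : ι → ℕ) : 0 ≤ oddsAgainst j₀ v :=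
  div_nonneg (Finset.sum_nonneg fun j _ ↦ (weight_pos v j).le) (weight_pos v j₀).le

theorem oddsAgainst_zero (j₀ : ι) : oddsAgainst j₀ 0 = (Fintype.card ι - 1 : ℕ) := by
  simp [oddsAgainst, weight, Finset.card_erase_of_mem]

variable [Nonempty ι] (v : ι → ℕ)

theorem sum_weight_lt_median_le :
    ∑ j with j < median v, weight v j ≤ ∑ j with median v ≤ j, weight v j :=
  (exists_weighted_median fun j ↦ (weight_pos v j).le).choose_spec.1

theorem sum_weight_median_lt_le :
    ∑ j with median v < j, weight v j ≤ ∑ j with j ≤ median v, weight v j :=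
  (exists_weighted_median fun j ↦ (weight_pos v j).le).choose_spec.2

theorem two_mul_sum_weight_cmp_eq_le {o : Ordering} (ho : o ≠ .eq) :
    2 * ∑ j with cmp j (median v) = o, weight v j ≤ ∑ j, weight v j := by
  rw [← Finset.sum_filter_add_sum_filter_not Finset.univ (fun j ↦ cmp j (median v) = o), two_mul,
    add_le_add_iff_left]
  cases o with
  | lt => simpa only [cmp_eq_lt_iff, not_lt] using sum_weight_lt_median_le v
  | eq => exact absurd rfl ho
  | gt => simpa only [cmp_eq_gt_iff, not_lt] using sum_weight_median_lt_le v

theorem weight_vote (o : Ordering) (j : ι) :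
    weight (vote v o) j = if cmp j (median v) = o then weight v j else weight v j / 4 := by
  unfold weight vote
  split_ifs
  · rfl
  · ring

theorem oddsAgainst_vote_le_four_mul (j₀ : ι) (o : Ordering) :
    oddsAgainst j₀ (vote v o) ≤ 4 * oddsAgainst j₀ v := by
  have hle (j : ι) : weight (vote v o) j ≤ weight v j := by
    have := weight_pos v j
    rw [weight_vote]; split_ifs <;> linarith
  have hge : weight v j₀ / 4 ≤ weight (vote v o) j₀ := by
    have := weight_pos v j₀
    rw [weight_vote]; split_ifs <;> linarith
  calc oddsAgainst j₀ (vote v o)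
    _ ≤ (∑ j ∈ Finset.univ.erase j₀, weight v j) / (weight v j₀ / 4) := by
      have := weight_pos v j₀
      exact div_le_div₀ (Finset.sum_nonneg fun j _ ↦ (weight_pos v j).le)
        (Finset.sum_le_sum fun j _ ↦ hle j) (by positivity) hge
    _ = 4 * oddsAgainst j₀ v := by unfold oddsAgainst; field_simp

theorem oddsAgainst_vote_cmp_le (j₀ : ι) :
    oddsAgainst j₀ (vote v (cmp j₀ (median v))) ≤ 5 / 8 * oddsAgainst j₀ v := by
  set o := cmp j₀ (median v) with ho
  have hagree : 2 * ∑ j with cmp j (median v) = o, weight v j ≤ ∑ j, weight v j + weight v j₀ := by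
    by_cases h : o = .eq
    · have hj₀ : j₀ = median v := cmp_eq_eq_iff .. |>.1 h
      have := Finset.single_le_sum (fun j _ ↦ (weight_pos v j).le) (Finset.mem_univ j₀)
      simp only [h, cmp_eq_eq_iff, ← hj₀, Finset.filter_eq', Finset.mem_univ, if_true,
        Finset.sum_singleton]
      linarith
    · linarith [two_mul_sum_weight_cmp_eq_le v h, weight_pos v j₀]
  have hsplit := Finset.sum_filter_add_sum_filter_not Finset.univ
    (fun j ↦ cmp j (median v) = o) (weight v)
  have hself : weight (vote v o) j₀ = weight v j₀ := by rw [weight_vote, if_pos ho.symm]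
  unfold oddsAgainst
  rw [hself, ← mul_div_assoc]
  refine div_le_div_of_nonneg_right ?_ (weight_pos v j₀).le
  rw [Finset.sum_erase_eq_sub (Finset.mem_univ _), Finset.sum_erase_eq_sub (Finset.mem_univ _),
    hself]
  simp only [weight_vote, Finset.sum_ite, ← Finset.sum_div]
  linarith

theorem one_le_oddsAgainst_of_median_ne {j₀ : ι} (h : median v ≠ j₀) : 1 ≤ oddsAgainst j₀ v := by
  have hmem : j₀ ∈ Finset.univ.filter fun j ↦ cmp j (median v) = cmp j₀ (median v) :=
    Finset.mem_filter_univ _ |>.2 rfl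
  have hself := Finset.single_le_sum (fun j _ ↦ (weight_pos v j).le) hmem
  have hhalf := two_mul_sum_weight_cmp_eq_le v (o := cmp j₀ (median v)) (by simpa using h.symm)
  rw [oddsAgainst, one_le_div (weight_pos v j₀), Finset.sum_erase_eq_sub (Finset.mem_univ _)]
  linarith

end WeightedMajority

section Evidence

/-- The evidence against the hypothesis that `c` observations with sum `z` have a positive mean:
an exponential supermartingale in `c` once a single observation has expected evidence at most `1`.
-/
noncomputable def evidence (κ θ : ℝ) (c : ℕ) (z : ℝ) : ℝ≥0∞ :=
  .ofReal (Real.exp (c * κ - θ * z))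

variable (κ θ : ℝ)

theorem evidence_zero : evidence κ θ 0 0 = 1 := by simp [evidence]

@[fun_prop]
theorem measurable_evidence (c : ℕ) : Measurable (evidence κ θ c) := by
  unfold evidence
  fun_prop

theorem evidence_succ (c : ℕ) (z y : ℝ) :
    evidence κ θ (c + 1) (z + y) = evidence κ θ c z * evidence κ θ 1 y := by
  unfold evidence
  rw [← ENNReal.ofReal_mul (Real.exp_pos _).le, ← Real.exp_add]
  congr 2
  push_cast
  ring

variable {κ θ}

theorem lintegral_evidence_succ_le {ν : Measure ℝ} {f : ℝ → ℝ}
    (hν : ∫⁻ y, evidence κ θ 1 (f y) ∂ν ≤ 1) (c : ℕ) (z : ℝ) :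
    ∫⁻ y, evidence κ θ (c + 1) (z + f y) ∂ν ≤ evidence κ θ c z := by
  simp_rw [evidence_succ]
  rw [lintegral_const_mul' (evidence κ θ c z) _ ENNReal.ofReal_ne_top]
  exact mul_le_of_le_one_right' hν

theorem lintegral_evidence_le_one_of_isSubGaussianArm {ν : Measure ℝ} {σ2 μ τ ε : ℝ}
    (hν : IsSubGaussianArm σ2 μ ν) (hε : ε ^ 2 = 1)
    (hκ : κ ≤ θ * (ε * (μ - τ)) - σ2 * θ ^ 2 / 2) :
    ∫⁻ y, evidence κ θ 1 (ε * (y - τ)) ∂ν ≤ 1 := by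
  have hexp (y : ℝ) : evidence κ θ 1 (ε * (y - τ)) ≤
      .ofReal (Real.exp (-(σ2 * θ ^ 2 / 2))) * .ofReal (Real.exp (-(θ * ε) * (y - μ))) := by
    rw [evidence, ← ENNReal.ofReal_mul (Real.exp_pos _).le, ← Real.exp_add]
    refine ENNReal.ofReal_le_ofReal (Real.exp_le_exp.2 ?_)
    push_cast
    linarith
  calc ∫⁻ y, evidence κ θ 1 (ε * (y - τ)) ∂ν
    _ ≤ .ofReal (Real.exp (-(σ2 * θ ^ 2 / 2))) *
          ∫⁻ y, .ofReal (Real.exp (-(θ * ε) * (y - μ))) ∂ν :=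
      (lintegral_mono hexp).trans_eq (lintegral_const_mul' _ _ ENNReal.ofReal_ne_top)
    _ ≤ .ofReal (Real.exp (-(σ2 * θ ^ 2 / 2))) * .ofReal (Real.exp (σ2 * (-(θ * ε)) ^ 2 / 2)) := by
      gcongr
      exact hν _
    _ = 1 := by
      rw [← ENNReal.ofReal_mul (Real.exp_pos _).le, ← Real.exp_add, neg_sq, mul_pow, hε, mul_one,
        neg_add_cancel, Real.exp_zero, ENNReal.ofReal_one]

theorem ofReal_exp_le_evidence (hθ : 0 ≤ θ) (c : ℕ) {z : ℝ} (hz : z ≤ 0) :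
    .ofReal (Real.exp (c * κ)) ≤ evidence κ θ c z := by
  refine ENNReal.ofReal_le_ofReal (Real.exp_le_exp.2 ?_)
  linarith [mul_nonpos_of_nonneg_of_nonpos hθ hz]

end Evidence

section Probing

variable {K : ℕ}

/-- The two arms that separate the median `j` from its neighbours: `j - 1` (side `false`) and `j`
(side `true`). A side that does not exist is mapped to some arm; `verdict` ignores it. -/
def probe [NeZero K] (j : Fin (K + 1)) : Bool → Fin K
  | false => Fin.ofNat K (j - 1)
  | true => Fin.ofNat K j

/-- The direction from `j` in which the sums `z` of the centred observations of the two probed arms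
locate the threshold. -/
noncomputable def verdict (j : Fin (K + 1)) (z : Bool → ℝ) : Ordering :=
  if 0 < j ∧ 0 ≤ z false then .lt else if j < Fin.last K ∧ z true < 0 then .gt else .eq

theorem verdict_eq_cmp [NeZero K] {j₀ j : Fin (K + 1)} {z : Bool → ℝ}
    (h : ∀ i, 0 ≤ z i ↔ j₀ ≤ (probe j i).castSucc) : verdict j z = cmp j₀ j := by
  have hlt : 0 < j ∧ 0 ≤ z false ↔ j₀ < j := by
    have hmod : 0 < j → ((j : ℕ) - 1) % K = j - 1 := fun hj ↦ Nat.mod_eq_of_lt (by omega)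
    rw [h, probe]
    simp only [Fin.le_def, Fin.lt_def, Fin.val_castSucc, Fin.val_ofNat, Fin.val_zero] at hmod ⊢
    grind
  have hgt : j < Fin.last K ∧ z true < 0 ↔ j < j₀ := by
    have hmod : j < Fin.last K → (j : ℕ) % K = j := Nat.mod_eq_of_lt
    rw [← not_le (a := 0), h, probe]
    simp only [Fin.le_def, Fin.lt_def, Fin.val_castSucc, Fin.val_ofNat, Fin.val_last] at hmod ⊢
    grind
  simp only [verdict, hlt, hgt, cmp, cmpUsing]

theorem measurable_comp_verdict {β : Type*} [MeasurableSpace β] (f : Ordering → β)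
    (j : Fin (K + 1)) : Measurable fun z ↦ f (verdict j z) := by
  simp only [verdict, apply_ite f]
  refine Measurable.ite ?_ measurable_const (Measurable.ite ?_ measurable_const measurable_const)
  · exact (MeasurableSet.const _).inter (measurableSet_le measurable_const (measurable_pi_apply _))
  · exact (MeasurableSet.const _).inter (measurableSet_lt (measurable_pi_apply _) measurable_const)

theorem exists_forall_iff_le_castSucc {p : Fin K → Prop} (hp : Monotone p) :
    ∃ j₀ : Fin (K + 1), ∀ k, p k ↔ j₀ ≤ k.castSucc := by
  have hne : {j : Fin (K + 1) | ∀ k, j ≤ k.castSucc → p k}.Nonempty :=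
    ⟨Fin.last K, fun k hk ↦ absurd hk k.castSucc_lt_last.not_ge⟩
  obtain ⟨j₀, hj₀, hleast⟩ := (OrderBot.bddBelow _).exists_isLeast_of_nonempty hne
  exact ⟨j₀, fun k ↦ ⟨fun hk ↦ hleast fun l hl ↦ hp hl hk, hj₀ k⟩⟩

/-- The sign of `μ k - τ` when exactly the arms from `j₀` on have `τ ≤ μ k`. -/
noncomputable def label (j₀ : Fin (K + 1)) (k : Fin K) : ℝ := if j₀ ≤ k.castSucc then 1 else -1

theorem label_sq (j₀ : Fin (K + 1)) (k : Fin K) : label j₀ k ^ 2 = 1 := by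
  unfold label
  split_ifs <;> norm_num

theorem label_mul_sub {j₀ : Fin (K + 1)} {k : Fin K} {x τ : ℝ} (h : τ ≤ x ↔ j₀ ≤ k.castSucc) :
    label j₀ k * (x - τ) = |x - τ| := by
  unfold label
  split_ifs with hk
  · rw [one_mul, abs_of_nonneg (sub_nonneg.2 (h.2 hk))]
  · rw [neg_one_mul, abs_of_neg (sub_neg.2 (not_le.1 (mt h.1 hk)))]

theorem label_mul_nonpos {j₀ : Fin (K + 1)} {k : Fin K} {z : ℝ} (h : ¬(0 ≤ z ↔ j₀ ≤ k.castSucc)) :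
    label j₀ k * z ≤ 0 := by
  unfold label
  split_ifs <;> grind

end Probing

section Search

variable {K : ℕ}

/-- The memory of the search: the votes cast against the `K + 1` candidate thresholds in the
completed phases, and the sums of the centred observations of the two probed arms in the current
phase. -/
abbrev SearchState (K : ℕ) := (Fin (K + 1) → ℕ) × (Bool → ℝ)

/-- Adds the observation `y` of round `r` of a phase to the sum of its side. The sides are probed
alternately, so the side of round `r` is the parity of `r`. -/
noncomputable def record (τ : ℝ) (r : ℕ) (x : SearchState K) (y : ℝ) : SearchState K :=
  (x.1, Function.update x.2 r.bodd (x.2 r.bodd + (y - τ)))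

/-- Ends a phase by casting a vote in the direction of its verdict and resetting the sums. -/
noncomputable def closePhase (x : SearchState K) : SearchState K :=
  (vote x.1 (verdict (median x.1) x.2), 0)

/-- The state transition of a search that runs `n` phases of `2 * m` rounds and ignores later
observations. -/
noncomputable def searchStep (τ : ℝ) (n m t : ℕ) (x : SearchState K) (y : ℝ) : SearchState K :=
  if t / (2 * m) < n then
    if t % (2 * m) + 1 = 2 * m then closePhase (record τ (t % (2 * m)) x y)
    else record τ (t % (2 * m)) x y
  else x

theorem measurable_record (τ : ℝ) (r : ℕ) :
    Measurable fun p : SearchState K × ℝ ↦ record τ r p.1 p.2 := by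
  unfold record
  fun_prop

theorem measurable_closePhase : Measurable (closePhase (K := K)) :=
  measurable_from_prod_countable_right fun v ↦
    (measurable_comp_verdict (vote v) (median v)).prodMk measurable_const

theorem measurable_searchStep (τ : ℝ) (n m t : ℕ) :
    Measurable fun p : SearchState K × ℝ ↦ searchStep τ n m t p.1 p.2 := by
  unfold searchStep
  split_ifs
  · exact measurable_closePhase.comp (measurable_record τ _)
  · exact measurable_record τ _
  · exact measurable_fst

section Potential

/-- The factor by which one phase changes the expected `s`-th power of the odds. The `3` is a
union bound: both signs are right, the first is wrong, or the second is wrong. -/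
noncomputable def phaseFactor (s : ℝ) : ℝ≥0∞ := 3 * .ofReal ((5 / 8) ^ s)

variable [NeZero K] (κ θ s : ℝ) (j₀ : Fin (K + 1))

/-- The potential after `r` rounds of a phase. It anticipates the odds against the true threshold
`j₀` after the vote, which shrink by `5 / 8` if both signs are right, and charges the other case to
the evidence against the sign of each side. -/
noncomputable def phasePotential (r : ℕ) (x : SearchState K) : ℝ≥0∞ :=
  .ofReal ((5 / 8 * oddsAgainst j₀ x.1) ^ s) *
    (1 + ∑ i, evidence κ θ (r.count fun r' ↦ r'.bodd = i)
      (label j₀ (probe (median x.1) i) * x.2 i))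

variable {κ θ s j₀}

theorem phasePotential_zero (v : Fin (K + 1) → ℕ) :
    phasePotential κ θ s j₀ 0 (v, 0) =
      phaseFactor s * .ofReal (oddsAgainst j₀ v ^ s) := by
  have hsum : (1 : ℝ≥0∞) + (1 + 1) = 3 := by norm_num
  simp only [phasePotential, phaseFactor, Nat.count_zero, Pi.zero_apply, mul_zero, evidence_zero,
    Fintype.sum_bool, hsum]
  rw [Real.mul_rpow (by norm_num) (oddsAgainst_nonneg j₀ v), ENNReal.ofReal_mul (by positivity)]
  ring

theorem lintegral_phasePotential_record_le {ν : Fin K → Measure ℝ} [∀ k, IsProbabilityMeasure (ν k)]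
    {τ : ℝ} (hν : ∀ k, ∫⁻ y, evidence κ θ 1 (label j₀ k * (y - τ)) ∂ν k ≤ 1) (r : ℕ)
    (x : SearchState K) :
    ∫⁻ y, phasePotential κ θ s j₀ (r + 1) (record τ r x y) ∂ν (probe (median x.1) r.bodd) ≤
      phasePotential κ θ s j₀ r x := by
  simp only [phasePotential, record]
  rw [lintegral_const_mul' _ _ ENNReal.ofReal_ne_top, lintegral_add_left measurable_const,
    lintegral_const, measure_univ, one_mul,
    lintegral_finsetSum _ fun i _ ↦ by fun_prop]
  gcongr with i
  obtain rfl | hi := eq_or_ne r.bodd i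
  · simp only [Nat.count_succ, if_true, Function.update_self, mul_add]
    exact lintegral_evidence_succ_le (hν _) _ _
  · simp only [Nat.count_succ, if_neg hi, add_zero, Function.update_of_ne hi.symm, lintegral_const,
      measure_univ, mul_one, le_refl]

theorem count_bodd_two_mul (m : ℕ) (i : Bool) : (2 * m).count (fun r ↦ r.bodd = i) = m := by
  induction m with
  | zero => rfl
  | succ m ih => cases i <;> simp [mul_add, Nat.count_succ, ih]

theorem ofReal_oddsAgainst_closePhase_le (hθ : 0 ≤ θ) (hs : 0 ≤ s) {m : ℕ}
    (hsκ : (32 / 5) ^ s ≤ Real.exp (m * κ)) (x : SearchState K) :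
    .ofReal (oddsAgainst j₀ (closePhase x).1 ^ s) ≤ phasePotential κ θ s j₀ (2 * m) x := by
  obtain ⟨v, z⟩ := x
  have hodds := oddsAgainst_nonneg j₀ v
  have hodds' := oddsAgainst_nonneg j₀ (closePhase (v, z)).1
  simp only [phasePotential, count_bodd_two_mul]
  by_cases hsign : ∀ i, 0 ≤ z i ↔ j₀ ≤ (probe (median v) i).castSucc
  · have hright : oddsAgainst j₀ (closePhase (v, z)).1 ≤ 5 / 8 * oddsAgainst j₀ v := by
      rw [closePhase, verdict_eq_cmp hsign]
      exact oddsAgainst_vote_cmp_le v j₀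
    refine le_mul_of_le_of_one_le ?_ le_self_add
    gcongr
  · obtain ⟨i, hi⟩ := not_forall.1 hsign
    have hwrong : oddsAgainst j₀ (closePhase (v, z)).1 ≤ 5 / 8 * oddsAgainst j₀ v * (32 / 5) :=
      (oddsAgainst_vote_le_four_mul v j₀ _).trans_eq (by ring)
    calc ENNReal.ofReal (oddsAgainst j₀ (closePhase (v, z)).1 ^ s)
      _ ≤ .ofReal ((5 / 8 * oddsAgainst j₀ v * (32 / 5)) ^ s) := by gcongr
      _ = .ofReal ((5 / 8 * oddsAgainst j₀ v) ^ s) * .ofReal ((32 / 5) ^ s) := by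
        rw [Real.mul_rpow (by positivity) (by norm_num), ENNReal.ofReal_mul (by positivity)]
      _ ≤ .ofReal ((5 / 8 * oddsAgainst j₀ v) ^ s) *
            evidence κ θ m (label j₀ (probe (median v) i) * z i) := by
        gcongr
        exact (ENNReal.ofReal_le_ofReal hsκ).trans
          (ofReal_exp_le_evidence hθ m (label_mul_nonpos hi))
      _ ≤ _ := by
        gcongr
        exact (Finset.single_le_sum_of_canonicallyOrdered (f := fun i ↦ evidence κ θ m
          (label j₀ (probe (median v) i) * z i)) (Finset.mem_univ i)).trans le_add_self

variable (κ θ s j₀) in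
/-- The potential of the whole search before round `t`: each phase that is still to come is
accounted for by `phaseFactor s`. -/
noncomputable def searchPotential (n m t : ℕ) (x : SearchState K) : ℝ≥0∞ :=
  if t / (2 * m) < n then
    phaseFactor s ^ (n - 1 - t / (2 * m)) *
      phasePotential κ θ s j₀ (t % (2 * m)) x
  else .ofReal (oddsAgainst j₀ x.1 ^ s)

theorem mul_add_div_and_mod_of_lt {a r : ℕ} (hr : r < a) (i : ℕ) :
    (a * i + r) / a = i ∧ (a * i + r) % a = r :=
  (Nat.div_mod_unique (by omega)).2 ⟨add_comm _ _, hr⟩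

theorem searchPotential_of_lt {n m i r : ℕ} (hi : i < n) (hr : r < 2 * m) (x : SearchState K) :
    searchPotential κ θ s j₀ n m (2 * m * i + r) x =
      phaseFactor s ^ (n - 1 - i) * phasePotential κ θ s j₀ r x := by
  simp only [searchPotential, mul_add_div_and_mod_of_lt hr, if_pos hi]

theorem searchPotential_of_le {n m t : ℕ} (ht : n ≤ t / (2 * m)) (x : SearchState K) :
    searchPotential κ θ s j₀ n m t x = .ofReal (oddsAgainst j₀ x.1 ^ s) :=
  if_neg ht.not_gt

theorem searchPotential_phase_start {m : ℕ} (hm : 0 < m) (n i : ℕ) (v : Fin (K + 1) → ℕ) :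
    searchPotential κ θ s j₀ n m (2 * m * i) (v, 0) =
      phaseFactor s ^ (n - i) * .ofReal (oddsAgainst j₀ v ^ s) := by
  obtain hi | hi := lt_or_ge i n
  · rw [← add_zero (2 * m * i), searchPotential_of_lt hi (by omega), phasePotential_zero,
      ← mul_assoc, ← pow_succ]
    congr 2
    omega
  · rw [searchPotential_of_le (by rwa [Nat.mul_div_cancel_left i (by omega)]),
      Nat.sub_eq_zero_of_le hi, pow_zero, one_mul]

theorem searchPotential_searchStep_le {m : ℕ} (hθ : 0 ≤ θ) (hs : 0 ≤ s)
    (hsκ : (32 / 5) ^ s ≤ Real.exp (m * κ)) {n i r : ℕ} (hi : i < n) (hr : r < 2 * m) (τ : ℝ)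
    (x : SearchState K) (y : ℝ) :
    searchPotential κ θ s j₀ n m (2 * m * i + r + 1) (searchStep τ n m (2 * m * i + r) x y) ≤
      phaseFactor s ^ (n - 1 - i) *
        phasePotential κ θ s j₀ (r + 1) (record τ r x y) := by
  simp only [searchStep, mul_add_div_and_mod_of_lt hr, if_pos hi, add_assoc]
  split_ifs with hlast
  · rw [hlast, ← mul_add_one, closePhase, searchPotential_phase_start (by omega), Nat.sub_sub,
      add_comm 1]
    gcongr
    exact ofReal_oddsAgainst_closePhase_le hθ hs hsκ _
  · rw [searchPotential_of_lt hi (by omega)]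

theorem lintegral_searchPotential_searchStep_le {ν : Fin K → Measure ℝ}
    [∀ k, IsProbabilityMeasure (ν k)] {τ : ℝ}
    (hν : ∀ k, ∫⁻ y, evidence κ θ 1 (label j₀ k * (y - τ)) ∂ν k ≤ 1) (hθ : 0 ≤ θ) (hs : 0 ≤ s)
    {m : ℕ} (hm : 0 < m) (hsκ : (32 / 5) ^ s ≤ Real.exp (m * κ)) (n t : ℕ) (x : SearchState K) :
    ∫⁻ y, searchPotential κ θ s j₀ n m (t + 1) (searchStep τ n m t x y)
      ∂ν (probe (median x.1) (t % (2 * m)).bodd) ≤ searchPotential κ θ s j₀ n m t x := by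
  obtain ht | ht := le_or_gt n (t / (2 * m))
  · have ht' : n ≤ (t + 1) / (2 * m) := ht.trans (Nat.div_le_div_right t.le_succ)
    simp only [searchPotential_of_le ht, searchPotential_of_le ht', searchStep, if_neg ht.not_gt,
      lintegral_const, measure_univ, mul_one, le_refl]
  obtain ⟨i, r, hr, rfl⟩ : ∃ i r, r < 2 * m ∧ t = 2 * m * i + r :=
    ⟨t / (2 * m), t % (2 * m), Nat.mod_lt _ (by omega), (Nat.div_add_mod _ _).symm⟩
  rw [(mul_add_div_and_mod_of_lt hr i).1] at ht
  rw [(mul_add_div_and_mod_of_lt hr i).2, searchPotential_of_lt ht hr]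
  calc _ ≤ _ := lintegral_mono fun y ↦ searchPotential_searchStep_le hθ hs hsκ ht hr τ x y
    _ = _ := lintegral_const_mul' _ _ (by unfold phaseFactor; finiteness)
    _ ≤ _ := by
      gcongr
      exact lintegral_phasePotential_record_le hν r x

end Potential

end Search

section Strategy

variable {K : ℕ}

/-- The strategy's estimate, before round `t`, of the number of arms with mean below the threshold:
the current median of the search. -/
noncomputable def thresholdEstimate (τ : ℝ) (n m t : ℕ) (h : Fin t → ℝ) : Fin (K + 1) :=
  median (stateAfter (searchStep τ n m) 0 t h).1

/-- The sampling rule that probes the two neighbours of the estimate alternately. -/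
noncomputable def samplingRule [NeZero K] (τ : ℝ) (n m t : ℕ) (h : Fin t → ℝ) : Fin K :=
  probe (thresholdEstimate τ n m t h) (t % (2 * m)).bodd

/-- The classification of the arms according to the final estimate. -/
noncomputable def classify (τ : ℝ) (n m T : ℕ) (h : Fin T → ℝ) (k : Fin K) : Bool :=
  thresholdEstimate τ n m T h ≤ k.castSucc

theorem measurable_thresholdEstimate (τ : ℝ) (n m t : ℕ) :
    Measurable (thresholdEstimate (K := K) τ n m t) :=
  (measurable_of_countable median).comp
    (measurable_stateAfter (measurable_searchStep τ n m) 0 t).fst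

theorem measurable_samplingRule [NeZero K] (τ : ℝ) (n m t : ℕ) :
    Measurable (samplingRule (K := K) τ n m t) :=
  (measurable_of_countable fun j ↦ probe j _).comp (measurable_thresholdEstimate τ n m t)

theorem measurable_classify (τ : ℝ) (n m T : ℕ) : Measurable (classify (K := K) τ n m T) :=
  (measurable_of_countable fun (j : Fin (K + 1)) k ↦ decide (j ≤ Fin.castSucc k)).comp
    (measurable_thresholdEstimate τ n m T)

theorem histMeasure_errSet_le [NeZero K] {κ θ s τ : ℝ} {j₀ : Fin (K + 1)} {n m T : ℕ}
    {ν : Fin K → Measure ℝ} [∀ k, IsProbabilityMeasure (ν k)] {μ : Fin K → ℝ}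
    (hμ : ∀ k, τ ≤ μ k ↔ j₀ ≤ k.castSucc)
    (hν : ∀ k, ∫⁻ y, evidence κ θ 1 (label j₀ k * (y - τ)) ∂ν k ≤ 1) (hθ : 0 ≤ θ) (hs : 0 ≤ s)
    (hm : 0 < m) (hsκ : (32 / 5) ^ s ≤ Real.exp (m * κ)) (hT : n * (2 * m) ≤ T) :
    histMeasure ν (samplingRule τ n m) T (errSet (classify τ n m T) μ τ) ≤
      phaseFactor s ^ n * .ofReal (K ^ s) := by
  let V (t : ℕ) (h : Fin t → ℝ) : ℝ≥0∞ :=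
    searchPotential κ θ s j₀ n m t (stateAfter (searchStep τ n m) 0 t h)
  have hV (t : ℕ) (h : Fin t → ℝ) :
      ∫⁻ y, V (t + 1) (Fin.snoc h y) ∂ν (samplingRule τ n m t h) ≤ V t h := by
    simp only [V, stateAfter_snoc]
    exact lintegral_searchPotential_searchStep_le hν hθ hs hm hsκ n t _
  have hdone : n ≤ T / (2 * m) := (Nat.le_div_iff_mul_le (by omega)).2 hT
  have herr : ∀ h ∈ errSet (classify τ n m T) μ τ, 1 ≤ V T h := by
    rintro h ⟨k, hk⟩
    have hne : thresholdEstimate τ n m T h ≠ j₀ := by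
      rintro heq
      simp [classify, heq, hμ] at hk
    rw [show V T h = _ from searchPotential_of_le hdone _, ENNReal.one_le_ofReal]
    exact Real.one_le_rpow (one_le_oddsAgainst_of_median_ne _ hne) hs
  have hstart : V 0 Fin.elim0 = phaseFactor s ^ n * .ofReal (K ^ s) :=
    (searchPotential_phase_start hm n 0 0).trans (by simp [oddsAgainst_zero])
  exact (histMeasure_le_of_supermartingale hV
    (measurableSet_errSet (measurable_classify τ n m T) μ τ) herr).trans_eq hstart

end Strategy

section Tuning

theorem exists_phase_schedule {K T : ℕ} (hK : 2 ≤ K) (hT : 18 * Real.log K ≤ T) :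
    ∃ n m : ℕ, 7 * Real.log K ≤ n ∧ n ≤ 9 * Real.log K ∧ 0 < m ∧ n * (2 * m) ≤ T ∧
      T ≤ 4 * (n * m) := by
  -- `log K ≤ n / 7` lets the decrease of the odds pay for the initial odds, `n ≤ 9 * log K` keeps
  -- the factor `3 ^ n` below `K ^ 12`.
  have hlog : 1 / 2 < Real.log K := by
    have : Real.log 2 ≤ Real.log K := Real.log_le_log (by norm_num) (by exact_mod_cast hK)
    linarith [Real.log_two_gt_d9]
  have hle : (⌊9 * Real.log K⌋₊ : ℝ) ≤ 9 * Real.log K := Nat.floor_le (by linarith)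
  have hge : 7 * Real.log K ≤ ⌊9 * Real.log K⌋₊ := by
    linarith [Nat.lt_floor_add_one (9 * Real.log K)]
  generalize ⌊9 * Real.log K⌋₊ = n at hle hge
  have hn : 0 < n := by
    rw [← Nat.cast_pos (α := ℝ)]
    linarith
  have hnT : 2 * n ≤ T := by
    rw [← Nat.cast_le (α := ℝ)]
    push_cast
    linarith
  have hm : 0 < T / (2 * n) := Nat.div_pos hnT (by omega)
  refine ⟨n, T / (2 * n), hge, hle, hm, ?_, ?_⟩
  · linarith [Nat.mul_div_le T (2 * n)]
  · nlinarith [Nat.lt_mul_div_succ T (show 0 < 2 * n by omega)]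

theorem phaseFactor_pow_mul_rpow_eq_exp {K : ℕ} (hK : 0 < K) (n : ℕ) (s : ℝ) :
    phaseFactor s ^ n * .ofReal (K ^ s) =
      .ofReal (Real.exp (n * Real.log 3 - s * (n * Real.log (8 / 5) - Real.log K))) := by
  have hK' : (0 : ℝ) < K := by exact_mod_cast hK
  have hlog : Real.log (5 / 8) = -Real.log (8 / 5) := by rw [← Real.log_inv]; norm_num
  rw [phaseFactor, ← ENNReal.ofReal_ofNat 3, ← ENNReal.ofReal_mul (by norm_num),
    ← ENNReal.ofReal_pow (by positivity), ← ENNReal.ofReal_mul (by positivity),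
    Real.rpow_def_of_pos (by norm_num), Real.rpow_def_of_pos hK', hlog]
  congr 1
  nth_rw 1 [← Real.exp_log (show (0 : ℝ) < 3 by norm_num)]
  rw [← Real.exp_add, ← Real.exp_nat_mul, ← Real.exp_add]
  congr 1
  ring

theorem one_seventh_add_log_div_six_le_log :
    1 / 7 + Real.log (32 / 5) / 6 ≤ Real.log (8 / 5) := by
  have h₃₂ : Real.log (32 / 5) = 5 * Real.log 2 - Real.log 5 := by
    rw [Real.log_div (by norm_num) (by norm_num), show (32 : ℝ) = 2 ^ 5 by norm_num, Real.log_pow,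
      Nat.cast_ofNat]
  have h₈ : Real.log (8 / 5) = 3 * Real.log 2 - Real.log 5 := by
    rw [Real.log_div (by norm_num) (by norm_num), show (8 : ℝ) = 2 ^ 3 by norm_num, Real.log_pow,
      Nat.cast_ofNat]
  linarith [Real.log_two_gt_d9, Real.log_five_lt_d9]

theorem phase_exponent_le {L κ : ℝ} {n m T : ℕ} (hκ : 0 ≤ κ) (hnL : 7 * L ≤ n) (hLn : n ≤ 9 * L)
    (hT : T ≤ 4 * (n * m)) :
    n * Real.log 3 - m * κ / Real.log (32 / 5) * (n * Real.log (8 / 5) - L) ≤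
      -(T * κ / 24) + 12 * L := by
  have hT' : (T : ℝ) ≤ 4 * (n * m) := by exact_mod_cast hT
  have hgain : T * κ / 24 ≤ m * κ / Real.log (32 / 5) * (n * Real.log (8 / 5) - L) :=
    calc T * κ / 24 ≤ 4 * (n * m) * κ / 24 := by gcongr
      _ = m * κ / Real.log (32 / 5) * (n * (Real.log (32 / 5) / 6)) := by field_simp; ring
      _ ≤ m * κ / Real.log (32 / 5) * (n * Real.log (8 / 5) - L) := by
        gcongr
        linarith [mul_le_mul_of_nonneg_left one_seventh_add_log_div_six_le_log n.cast_nonneg]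
  have hloss : n * Real.log 3 ≤ 12 * L :=
    calc n * Real.log 3 ≤ n * (4 / 3) := by gcongr; linarith [Real.log_three_lt_d9]
      _ ≤ 12 * L := by linarith
  linarith

theorem histMeasure_errSet_le_exp {K : ℕ} [NeZero K] {κ θ τ : ℝ} {j₀ : Fin (K + 1)} {n m T : ℕ}
    {ν : Fin K → Measure ℝ} [∀ k, IsProbabilityMeasure (ν k)] {μ : Fin K → ℝ}
    (hμ : ∀ k, τ ≤ μ k ↔ j₀ ≤ k.castSucc)
    (hν : ∀ k, ∫⁻ y, evidence κ θ 1 (label j₀ k * (y - τ)) ∂ν k ≤ 1) (hκ : 0 ≤ κ) (hθ : 0 ≤ θ)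
    (hnK : 7 * Real.log K ≤ n) (hKn : n ≤ 9 * Real.log K) (hm : 0 < m) (hnT : n * (2 * m) ≤ T)
    (hT : T ≤ 4 * (n * m)) :
    histMeasure ν (samplingRule τ n m) T (errSet (classify τ n m T) μ τ) ≤
      .ofReal (Real.exp (-(T * κ / 24) + 12 * Real.log K)) := by
  have hlog : 0 < Real.log (32 / 5) := Real.log_pos (by norm_num)
  set s := m * κ / Real.log (32 / 5)
  have hs : 0 ≤ s := by positivity
  have hsκ : (32 / 5) ^ s = Real.exp (m * κ) := by
    rw [Real.rpow_def_of_pos (by norm_num), mul_div_cancel₀ _ hlog.ne']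
  refine (histMeasure_errSet_le hμ hν hθ hs hm hsκ.le hnT).trans ?_
  rw [phaseFactor_pow_mul_rpow_eq_exp (NeZero.pos K)]
  gcongr
  exact phase_exponent_le hκ hnK hKn hT

end Tuning

end MonotoneBandit

open MonotoneBandit in
theorem monotone_upper_bound_general
    (K T : ℕ) (hK : 2 ≤ K) (hT : 18 * Real.log K ≤ T) (τ : ℝ) :
    ∃ (π : (t : ℕ) → (Fin t → ℝ) → Fin K) (Qhat : (Fin T → ℝ) → Fin K → Bool),
      (∀ t, Measurable (π t)) ∧ Measurable Qhat ∧
      ∀ (σ : ℝ), 0 < σ → ∀ (ν : Fin K → Measure ℝ) (μ : Fin K → ℝ),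
        (∀ k, IsProbabilityMeasure (ν k)) →
        (∀ k, ∫ x, x ∂ν k = μ k) →
        (∀ k, IsSubGaussianArm (σ ^ 2) (μ k) (ν k)) →
        (Monotone fun k ↦ τ ≤ μ k) →
        histMeasure ν π T (errSet Qhat μ τ) ≤
          ENNReal.ofReal (Real.exp (-(1 / 48 : ℝ) * T * (⨅ k, |μ k - τ|) ^ 2 / σ ^ 2
            + 12 * Real.log K)) := by
  have : NeZero K := ⟨by omega⟩
  obtain ⟨n, m, hnK, hKn, hm, hnT, hTnm⟩ := exists_phase_schedule hK hT
  refine ⟨samplingRule τ n m, classify τ n m T, measurable_samplingRule τ n m,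
    measurable_classify τ n m T, fun σ hσ ν μ _ _ hν hμ ↦ ?_⟩
  obtain ⟨j₀, hj₀⟩ := exists_forall_iff_le_castSucc hμ
  set Δ := ⨅ k, |μ k - τ|
  have hΔ : 0 ≤ Δ := Real.iInf_nonneg fun k ↦ abs_nonneg _
  have hgap (k : Fin K) : Δ ≤ label j₀ k * (μ k - τ) :=
    (ciInf_le (Set.finite_range _).bddBelow k).trans_eq (label_mul_sub (hj₀ k)).symm
  have hevidence (k : Fin K) :
      ∫⁻ y, evidence (Δ ^ 2 / (2 * σ ^ 2)) (Δ / σ ^ 2) 1 (label j₀ k * (y - τ)) ∂ν k ≤ 1 := by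
    refine lintegral_evidence_le_one_of_isSubGaussianArm (hν k) (label_sq j₀ k) ?_
    calc Δ ^ 2 / (2 * σ ^ 2) = Δ / σ ^ 2 * Δ - σ ^ 2 * (Δ / σ ^ 2) ^ 2 / 2 := by field_simp; ring
      _ ≤ _ := by gcongr; exact hgap k
  refine (histMeasure_errSet_le_exp hj₀ hevidence (by positivity) (by positivity) hnK hKn hm hnT
    hTnm).trans_eq ?_
  congr 3
  field_simp
  ring

/-- Problem dependent upper bound for the monotone thresholding bandit problem
(Theorem 2): for `T > 36 log K` there is a parameter free fixed-budget strategy (PD-MTB)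
whose probability of error on every sub-Gaussian bandit problem with nondecreasing means is
at most `exp(−(1/48)·T·Δ_min²/σ² + 12·log K)`. -/
theorem monotone_upper_bound
    (K T : ℕ) (hK : 3 ≤ K) (hT : 36 * Real.log K < T) (τ : ℝ) :
    ∃ (π : (t : ℕ) → (Fin t → ℝ) → Fin K) (Qhat : (Fin T → ℝ) → Fin K → Bool),
      (∀ t, Measurable (π t)) ∧ Measurable Qhat ∧
      ∀ (σ : ℝ), 0 < σ → ∀ (ν : Fin K → Measure ℝ) (μ : Fin K → ℝ),
        (∀ k, IsProbabilityMeasure (ν k)) →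
        (∀ k, ∫ x, x ∂ν k = μ k) →
        (∀ k, IsSubGaussianArm (σ ^ 2) (μ k) (ν k)) →
        Monotone μ →
        histMeasure ν π T (errSet Qhat μ τ) ≤
          ENNReal.ofReal (Real.exp (-(1 / 48 : ℝ) * T * (⨅ k, |μ k - τ|) ^ 2 / σ ^ 2
            + 12 * Real.log K)) := by
  obtain ⟨π, Qhat, hπ, hQ, herr⟩ := monotone_upper_bound_general K T (by omega)
    (by linarith [Real.log_natCast_nonneg K]) τ
  exact ⟨π, Qhat, hπ, hQ, fun σ hσ ν μ hprob hmean hν hμ ↦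
    herr σ hσ ν μ hprob hmean hν fun _ _ hkl h ↦ h.trans (hμ hkl)⟩
end

section
/- Let K ≥ 3, T ≥ 1, σ > 0, τ ∈ ℝ, and let Δ ∈ ℝ^K with Δ_k > 0 for all k be such that there exists a concave real sequence (m_k)_{k=1}^K with |m_k − τ| = Δ_k for every k and with m_l ≥ τ for at least one l. Then for every fixed-budget strategy π with horizon T there exists a bandit problem ν whose arms are Gaussian measures on ℝ with variance σ², whose means (μ_k)_{k=1}^K form a concave sequence and satisfy Δ_k/10 ≤ |μ_k − τ| ≤ 3·Δ_k for every k ∈ [K], such that the probability of error satisfies e_T^{ν,π} ≥ (1/4)·exp(−9·T·Δ_min²/σ²), where Δ_min = min_{k∈[K]} Δ_k. -/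
open MeasureTheory ProbabilityTheory

/-- A finite sequence `(μ_k)_{k=1}^K` is concave if `μ_{k-1} + μ_{k+1} ≤ 2 μ_k`
for all `1 < k < K` (here stated with 0-based indices). -/
def ConcaveSeq {K : ℕ} (μ : Fin K → ℝ) : Prop :=
  ∀ (i : ℕ) (h : i + 2 < K),
    μ ⟨i, by omega⟩ + μ ⟨i + 2, h⟩ ≤ 2 * μ ⟨i + 1, by omega⟩

/-!
The proof is Le Cam's two-point method. One finds two concave mean sequences, both with gaps
comparable to `Δ`, which are uniformly `3 * Δ_min`-close and disagree on the label of some arm. On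
every history the strategy then errs on at least one of them, while by Cauchy–Schwarz each round
costs only a factor `exp ((3 * Δ_min) ^ 2 / σ ^ 2)` in passing from one problem to the other.

Where a concave sequence with all gaps at least `Δ_min` crosses the threshold it jumps by at least
`2 * Δ_min`, so beyond the crossing it keeps falling at this speed. If an arm with the smallest gap
lies above the threshold, one may take such an arm with only steeply falling arms on one side: a
tilt towards that side pushes it below the threshold and hardly moves the arms on the other side.
If it lies below, at most one other negative arm is within `3 * Δ_min` of the threshold, and one of
two upward shifts keeps both of these arms away from it.
-/

open scoped ENNReal NNReal

section SecondMoment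

variable {α β : Type*} [MeasurableSpace α] [MeasurableSpace β]
  {P Q : Measure α} {C D : ℝ≥0∞}

/-- `Q` has a likelihood ratio with respect to `P` whose second moment `∫ (dQ/dP)² dP`, that is
`1 + χ²(Q ‖ P)`, is at most `C`. The bound is encoded by the Cauchy–Schwarz inequality it is
equivalent to, which needs no density and composes directly along kernels. -/
def SecondMomentLE (Q P : Measure α) (C : ℝ≥0∞) : Prop :=
  ∀ f : α → ℝ≥0∞, Measurable f → (∫⁻ x, f x ∂Q) ^ 2 ≤ C * ∫⁻ x, f x ^ 2 ∂P

namespace SecondMomentLE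

lemma mono (h : SecondMomentLE Q P C) (hCD : C ≤ D) : SecondMomentLE Q P D :=
  fun f hf ↦ (h f hf).trans (mul_le_mul_left hCD _)

lemma withDensity (P : Measure α) {r : α → ℝ≥0∞} (hr : Measurable r) :
    SecondMomentLE (P.withDensity r) P (∫⁻ x, r x ^ 2 ∂P) := by
  intro f hf
  have holder := ENNReal.lintegral_mul_le_Lp_mul_Lq P Real.HolderConjugate.two_two
    hr.aemeasurable hf.aemeasurable
  calc (∫⁻ x, f x ∂P.withDensity r) ^ 2
      = (∫⁻ x, (r * f) x ∂P) ^ 2 := by rw [lintegral_withDensity_eq_lintegral_mul _ hr hf]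
    _ ≤ _ := pow_le_pow_left' holder 2
    _ = (∫⁻ x, r x ^ 2 ∂P) * ∫⁻ x, f x ^ 2 ∂P := by
      rw [mul_pow, ← ENNReal.rpow_mul_natCast, ← ENNReal.rpow_mul_natCast]
      norm_num

lemma refl (P : Measure α) [IsProbabilityMeasure P] : SecondMomentLE P P 1 := by
  simpa using SecondMomentLE.withDensity P measurable_one

lemma map (h : SecondMomentLE Q P C) {g : α → β} (hg : Measurable g) :
    SecondMomentLE (Q.map g) (P.map g) C := by
  intro f hf
  rw [lintegral_map hf hg, lintegral_map (hf.pow_const 2) hg]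
  exact h _ (hf.comp hg)

lemma compProd [SFinite P] [SFinite Q] {κ η : Kernel α β} [IsSFiniteKernel κ] [IsSFiniteKernel η]
    (h : SecondMomentLE Q P C) (hκη : ∀ a, SecondMomentLE (κ a) (η a) D) :
    SecondMomentLE (Q ⊗ₘ κ) (P ⊗ₘ η) (C * D) := by
  intro f hf
  rw [Measure.lintegral_compProd hf, Measure.lintegral_compProd (hf.pow_const 2)]
  calc (∫⁻ a, ∫⁻ b, f (a, b) ∂κ a ∂Q) ^ 2
      ≤ C * ∫⁻ a, (∫⁻ b, f (a, b) ∂κ a) ^ 2 ∂P := h _ hf.lintegral_kernel_prod_right'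
    _ ≤ C * ∫⁻ a, D * ∫⁻ b, f (a, b) ^ 2 ∂η a ∂P := by
      gcongr with a
      exact hκη a _ (hf.comp measurable_prodMk_left)
    _ = C * D * ∫⁻ a, ∫⁻ b, f (a, b) ^ 2 ∂η a ∂P := by
      rw [lintegral_const_mul _ (hf.pow_const 2).lintegral_kernel_prod_right', mul_assoc]

lemma measure_sq_le (h : SecondMomentLE Q P C) {E : Set α} (hE : MeasurableSet E) :
    Q E ^ 2 ≤ C * P E := by
  have indicator_sq : ∀ x, E.indicator (1 : α → ℝ≥0∞) x ^ 2 = E.indicator 1 x := by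
    intro x
    by_cases hx : x ∈ E <;> simp [hx]
  simpa only [indicator_sq, lintegral_indicator_one hE]
    using h (E.indicator 1) (measurable_one.indicator hE)

lemma half_le_or_quarter_le (h : SecondMomentLE Q P C) {E F : Set α} (hE : MeasurableSet E)
    (hEF : 1 ≤ Q E + Q F) : 1 / 2 ≤ Q F ∨ 1 / 4 ≤ C * P E := by
  refine or_iff_not_imp_left.mpr fun hF ↦ ?_
  have half_le : 1 / 2 ≤ Q E := by
    by_contra! hE_lt
    have := hEF.trans_lt (ENNReal.add_lt_add hE_lt (not_le.mp hF))
    simp [ENNReal.inv_two_add_inv_two] at this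
  calc (1 / 4 : ℝ≥0∞) = (1 / 2) ^ 2 := by
        rw [one_div, one_div, ← ENNReal.inv_pow]; norm_num
    _ ≤ Q E ^ 2 := pow_le_pow_left' half_le 2
    _ ≤ C * P E := h.measure_sq_le hE

end SecondMomentLE

end SecondMoment

lemma withDensity_exp_gaussianReal (m t : ℝ) {v : ℝ≥0} (hv : v ≠ 0) :
    (gaussianReal m v).withDensity
      (fun x ↦ ENNReal.ofReal (Real.exp (t * (x - m) - v * t ^ 2 / 2))) =
      gaussianReal (m + v * t) v := by
  rw [gaussianReal_of_var_ne_zero _ hv, gaussianReal_of_var_ne_zero _ hv,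
    ← withDensity_mul _ (measurable_gaussianPDF m v) (by fun_prop)]
  congr 1 with x
  have hv' : (v : ℝ) ≠ 0 := by exact_mod_cast hv
  simp only [Pi.mul_apply, gaussianPDF, gaussianPDFReal]
  rw [← ENNReal.ofReal_mul (by positivity), mul_assoc _ (Real.exp _), ← Real.exp_add]
  congr 3
  field_simp
  ring

lemma lintegral_exp_gaussianReal (m t : ℝ) {v : ℝ≥0} (hv : v ≠ 0) :
    ∫⁻ x, ENNReal.ofReal (Real.exp (t * (x - m) - v * t ^ 2 / 2)) ∂gaussianReal m v = 1 := by
  rw [← setLIntegral_univ, ← withDensity_apply _ .univ, withDensity_exp_gaussianReal m t hv,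
    measure_univ]

lemma SecondMomentLE.gaussianReal_add (m t : ℝ) {v : ℝ≥0} (hv : v ≠ 0) :
    SecondMomentLE (gaussianReal (m + v * t) v) (gaussianReal m v)
      (ENNReal.ofReal (Real.exp (v * t ^ 2))) := by
  rw [← withDensity_exp_gaussianReal m t hv]
  refine (SecondMomentLE.withDensity _ (by fun_prop)).mono (le_of_eq ?_)
  -- The square of the tilt by `t` is, up to normalization, the tilt by `2 * t`.
  have tilt_sq : ∀ x, ENNReal.ofReal (Real.exp (t * (x - m) - v * t ^ 2 / 2)) ^ 2 =
      ENNReal.ofReal (Real.exp (v * t ^ 2)) *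
        ENNReal.ofReal (Real.exp (2 * t * (x - m) - v * (2 * t) ^ 2 / 2)) := by
    intro x
    rw [← ENNReal.ofReal_pow (by positivity), ← ENNReal.ofReal_mul (by positivity),
      ← Real.exp_nat_mul, ← Real.exp_add]
    congr 2
    push_cast
    ring
  simp only [tilt_sq]
  rw [lintegral_const_mul _ (by fun_prop), lintegral_exp_gaussianReal m _ hv, mul_one]

lemma SecondMomentLE.gaussianReal (a b : ℝ) {v : ℝ≥0} (hv : v ≠ 0) :
    SecondMomentLE (gaussianReal b v) (gaussianReal a v)
      (ENNReal.ofReal (Real.exp ((a - b) ^ 2 / v))) := by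
  have hv' : (v : ℝ) ≠ 0 := by exact_mod_cast hv
  convert SecondMomentLE.gaussianReal_add a ((b - a) / v) hv using 2
  · field_simp
    ring_nf
  · congr 1
    field_simp
    ring

section History

variable {K : ℕ} {π : (t : ℕ) → (Fin t → ℝ) → Fin K}

/-- The law of the next observation given the history, when the next arm is chosen by `p` and
arm `k` produces observations of law `ν k`. -/
noncomputable def armKernel {n : ℕ} (ν : Fin K → Measure ℝ) {p : (Fin n → ℝ) → Fin K}
    (hp : Measurable p) : Kernel (Fin n → ℝ) ℝ :=
  (Kernel.ofFunOfCountable ν).comap p hp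

instance {n : ℕ} (ν : Fin K → Measure ℝ) [hν : ∀ k, IsProbabilityMeasure (ν k)]
    {p : (Fin n → ℝ) → Fin K} (hp : Measurable p) : IsMarkovKernel (armKernel ν hp) :=
  ⟨fun h ↦ hν (p h)⟩

lemma measurable_finSnoc (n : ℕ) :
    Measurable fun q : (Fin n → ℝ) × ℝ ↦ (Fin.snoc q.1 q.2 : Fin (n + 1) → ℝ) :=
  (continuous_fst.finSnoc continuous_snd).measurable

lemma histMeasure_succ (ν : Fin K → Measure ℝ) [∀ k, IsProbabilityMeasure (ν k)]
    (hπ : ∀ t, Measurable (π t)) (n : ℕ) [SFinite (histMeasure ν π n)] :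
    histMeasure ν π (n + 1) = (histMeasure ν π n ⊗ₘ armKernel ν (hπ n)).map
      fun q ↦ (Fin.snoc q.1 q.2 : Fin (n + 1) → ℝ) := by
  rw [Measure.compProd_eq_comp_prod, Measure.map_comp _ _ (measurable_finSnoc n), histMeasure]
  congr 1 with h : 1
  rw [Kernel.map_apply _ (measurable_finSnoc n), Kernel.prod_apply, Kernel.id_apply,
    Measure.dirac_prod, Measure.map_map (measurable_finSnoc n) measurable_prodMk_left]
  rfl

lemma isProbabilityMeasure_histMeasure (ν : Fin K → Measure ℝ) [∀ k, IsProbabilityMeasure (ν k)]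
    (hπ : ∀ t, Measurable (π t)) (n : ℕ) : IsProbabilityMeasure (histMeasure ν π n) := by
  induction n with
  | zero => exact Measure.dirac.isProbabilityMeasure
  | succ n ih =>
    rw [histMeasure_succ ν hπ]
    exact Measure.isProbabilityMeasure_map (measurable_finSnoc n).aemeasurable

lemma SecondMomentLE.histMeasure {ν ν' : Fin K → Measure ℝ} [∀ k, IsProbabilityMeasure (ν k)]
    [∀ k, IsProbabilityMeasure (ν' k)] {C : ℝ≥0∞} (h : ∀ k, SecondMomentLE (ν' k) (ν k) C)
    (hπ : ∀ t, Measurable (π t)) (n : ℕ) :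
    SecondMomentLE (histMeasure ν' π n) (histMeasure ν π n) (C ^ n) := by
  induction n with
  | zero => simpa using! SecondMomentLE.refl (Measure.dirac fun i ↦ Fin.elim0 i)
  | succ n ih =>
    have := isProbabilityMeasure_histMeasure ν hπ n
    have := isProbabilityMeasure_histMeasure ν' hπ n
    rw [histMeasure_succ ν hπ, histMeasure_succ ν' hπ, pow_succ]
    exact (ih.compProd fun y ↦ h (π n y)).map (measurable_finSnoc n)

end History

section TwoPoint

variable {K T : ℕ} {Qhat : (Fin T → ℝ) → Fin K → Bool} {μ μ' : Fin K → ℝ} {τ : ℝ}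

lemma measurableSet_errSet (hQhat : Measurable Qhat) (μ : Fin K → ℝ) (τ : ℝ) :
    MeasurableSet (errSet Qhat μ τ) :=
  hQhat (Set.toFinite {q : Fin K → Bool | ∃ k, (q k = true) ≠ (τ ≤ μ k)}).measurableSet

lemma errSet_union_errSet_eq_univ {j : Fin K} (hμ : μ j < τ) (hμ' : τ ≤ μ' j) :
    errSet Qhat μ τ ∪ errSet Qhat μ' τ = Set.univ := by
  refine Set.eq_univ_of_forall fun y ↦ ?_
  cases hy : Qhat y j with
  | true => exact Or.inl ⟨j, by simp [hy, hμ]⟩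
  | false => exact Or.inr ⟨j, by simp [hy, hμ']⟩

lemma ofReal_mul_exp_neg_le {c x : ℝ} {p : ℝ≥0∞}
    (h : ENNReal.ofReal c ≤ ENNReal.ofReal (Real.exp x) * p) :
    ENNReal.ofReal (c * Real.exp (-x)) ≤ p := by
  rw [mul_comm, ENNReal.ofReal_mul (by positivity)]
  calc ENNReal.ofReal (Real.exp (-x)) * ENNReal.ofReal c
      ≤ ENNReal.ofReal (Real.exp (-x)) * (ENNReal.ofReal (Real.exp x) * p) := by gcongr
    _ = p := by
      rw [← mul_assoc, ← ENNReal.ofReal_mul (by positivity), ← Real.exp_add]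
      simp

lemma le_histMeasure_errSet_or_le_histMeasure_errSet {v : ℝ≥0} (hv : v ≠ 0)
    {π : (t : ℕ) → (Fin t → ℝ) → Fin K} (hπ : ∀ t, Measurable (π t)) (hQhat : Measurable Qhat)
    {d : ℝ} (hd : ∀ k, |μ k - μ' k| ≤ d) {j : Fin K} (hμ : μ j < τ) (hμ' : τ ≤ μ' j) :
    ENNReal.ofReal (1 / 4 * Real.exp (-(T * (d ^ 2 / v)))) ≤
        histMeasure (fun k ↦ gaussianReal (μ k) v) π T (errSet Qhat μ τ) ∨
      ENNReal.ofReal (1 / 4 * Real.exp (-(T * (d ^ 2 / v)))) ≤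
        histMeasure (fun k ↦ gaussianReal (μ' k) v) π T (errSet Qhat μ' τ) := by
  set P := histMeasure (fun k ↦ gaussianReal (μ k) v) π T
  set Q := histMeasure (fun k ↦ gaussianReal (μ' k) v) π T
  have : IsProbabilityMeasure Q := isProbabilityMeasure_histMeasure _ hπ T
  have arms : ∀ k, SecondMomentLE (gaussianReal (μ' k) v) (gaussianReal (μ k) v)
      (ENNReal.ofReal (Real.exp (d ^ 2 / v))) := fun k ↦
    (SecondMomentLE.gaussianReal (μ k) (μ' k) hv).mono <| by
      gcongr ENNReal.ofReal (Real.exp (?_ / _))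
      exact sq_le_sq' (neg_le_of_abs_le (hd k)) (le_of_abs_le (hd k))
  have errors_cover : 1 ≤ Q (errSet Qhat μ τ) + Q (errSet Qhat μ' τ) := by
    rw [← measure_univ (μ := Q), ← errSet_union_errSet_eq_univ hμ hμ']
    exact measure_union_le _ _
  have exp_le_one : Real.exp (-(T * (d ^ 2 / v))) ≤ 1 :=
    Real.exp_le_one_iff.mpr (neg_nonpos.mpr (by positivity))
  rcases (SecondMomentLE.histMeasure arms hπ T).half_le_or_quarter_le
    (measurableSet_errSet hQhat μ τ) errors_cover with hQ | hP
  · refine Or.inr (le_trans (ENNReal.ofReal_le_of_le_toReal ?_) hQ)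
    norm_num
    linarith
  · refine Or.inl (ofReal_mul_exp_neg_le ?_)
    rw [Real.exp_nat_mul, ENNReal.ofReal_pow (by positivity)]
    convert hP using 1
    rw [ENNReal.ofReal_div_of_pos (by norm_num)]
    norm_num

end TwoPoint

namespace ConcaveSeq

variable {K : ℕ} {μ ν : Fin K → ℝ} {δ : ℝ}

lemma add_le_two_mul (hμ : ConcaveSeq μ) {i j k : Fin K} (hij : (j : ℕ) = i + 1)
    (hjk : (k : ℕ) = j + 1) : μ i + μ k ≤ 2 * μ j := by
  obtain ⟨j, _⟩ := j
  obtain ⟨k, hk⟩ := k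
  obtain rfl : j = i + 1 := hij
  obtain rfl : k = i + 2 := hjk
  exact hμ i hk

lemma add (hμ : ConcaveSeq μ) (hν : ConcaveSeq ν) : ConcaveSeq fun k ↦ μ k + ν k :=
  fun i hi ↦ by linarith [hμ i hi, hν i hi]

lemma inf (hμ : ConcaveSeq μ) (hν : ConcaveSeq ν) : ConcaveSeq fun k ↦ min (μ k) (ν k) := by
  intro i hi
  rw [mul_min_of_nonneg _ _ zero_le_two]
  exact le_min ((add_le_add (min_le_left _ _) (min_le_left _ _)).trans (hμ i hi))
    ((add_le_add (min_le_right _ _) (min_le_right _ _)).trans (hν i hi))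

lemma affine (a b : ℝ) : ConcaveSeq fun k : Fin K ↦ a * k + b :=
  fun i hi ↦ by push_cast; linarith

lemma const (b : ℝ) : ConcaveSeq fun _ : Fin K ↦ b := by
  simpa using affine (K := K) 0 b

lemma comp_rev (hμ : ConcaveSeq μ) : ConcaveSeq (μ ∘ Fin.rev) := by
  intro i hi
  rw [add_comm]
  exact hμ.add_le_two_mul (by simp only [Fin.val_rev]; omega) (by simp only [Fin.val_rev]; omega)

lemma sub_le_sub_of_le (hμ : ConcaveSeq μ) {p p' q q' : Fin K} (hp : (p' : ℕ) = p + 1)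
    (hq : (q' : ℕ) = q + 1) (hpq : p ≤ q) : μ q' - μ q ≤ μ p' - μ p := by
  rcases hpq.eq_or_lt with rfl | hlt
  · rw [Fin.ext (hq.trans hp.symm)]
  · let p'' : Fin K := ⟨p' + 1, by omega⟩
    have next : μ q' - μ q ≤ μ p'' - μ p' := hμ.sub_le_sub_of_le rfl hq (by omega)
    linarith [hμ.add_le_two_mul hp (rfl : (p'' : ℕ) = p' + 1)]
termination_by (q : ℕ) - p

lemma mul_sub_le_sub (hμ : ConcaveSeq μ) {p q q' : Fin K} (hq : (q' : ℕ) = q + 1) (hpq : p ≤ q) :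
    (μ q' - μ q) * ((q : ℝ) - p) ≤ μ q - μ p := by
  rcases hpq.eq_or_lt with rfl | hlt
  · simp
  · let p' : Fin K := ⟨p + 1, by omega⟩
    have next : (μ q' - μ q) * ((q : ℝ) - p') ≤ μ q - μ p' := hμ.mul_sub_le_sub hq hlt
    have cast_p' : (p' : ℝ) = p + 1 := by simp [p']
    rw [cast_p'] at next
    linarith [hμ.sub_le_sub_of_le (rfl : (p' : ℕ) = p + 1) hq hpq]
termination_by (q : ℕ) - p

section Slope

variable (hμ : ConcaveSeq μ) (hδ : ∀ k, δ ≤ |μ k|)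
include hμ hδ

-- The increment at `i` is no smaller than the one at which the sequence becomes nonnegative, and
-- the latter leads from a value `≤ -δ` to a value `≥ δ`.
lemma two_mul_le_sub_of_neg_of_nonneg {i j l : Fin K} (hij : (j : ℕ) = i + 1) (hil : i < l)
    (hi : μ i < 0) (hl : 0 ≤ μ l) : 2 * δ ≤ μ j - μ i := by
  rcases le_or_gt 0 (μ j) with hj | hj
  · linarith [hδ i, hδ j, abs_of_neg hi, abs_of_nonneg hj]
  · have hjl : j ≠ l := fun h ↦ hj.not_ge (h ▸ hl)
    let k : Fin K := ⟨j + 1, by omega⟩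
    have next : 2 * δ ≤ μ k - μ j := two_mul_le_sub_of_neg_of_nonneg rfl (by omega) hj hl
    linarith [hμ.add_le_two_mul hij (rfl : (k : ℕ) = j + 1)]
termination_by (l : ℕ) - j

lemma le_sub_of_neg_of_nonneg {p q l : Fin K} (hpq : p ≤ q) (hql : q < l) (hq : μ q < 0)
    (hl : 0 ≤ μ l) : μ p ≤ μ q - 2 * δ * ((q : ℝ) - p) := by
  let q' : Fin K := ⟨q + 1, by omega⟩
  have slope : 2 * δ ≤ μ q' - μ q := hμ.two_mul_le_sub_of_neg_of_nonneg hδ rfl hql hq hl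
  have pq_nonneg : (0 : ℝ) ≤ (q : ℝ) - p := sub_nonneg.mpr (by exact_mod_cast hpq)
  linarith [hμ.mul_sub_le_sub (rfl : (q' : ℕ) = q + 1) hpq,
    mul_le_mul_of_nonneg_right slope pq_nonneg]

lemma le_neg_three_mul_of_lt {p q l : Fin K} (hδ_nonneg : 0 ≤ δ) (hpq : p < q) (hql : q < l)
    (hq : μ q < 0) (hl : 0 ≤ μ l) : μ p ≤ -(3 * δ) := by
  have one_le : (1 : ℝ) ≤ (q : ℝ) - p := by
    rw [le_sub_iff_add_le']
    exact_mod_cast hpq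
  linarith [hμ.le_sub_of_neg_of_nonneg hδ hpq.le hql hq hl, hδ q, abs_of_neg hq,
    le_mul_of_one_le_right (by positivity : 0 ≤ 2 * δ) one_le]

lemma mem_Ioo_of_neg_of_nonneg {p q l : Fin K} (hpq : p < q)
    (hp : μ p ∈ Set.Ioo (-(3 * δ)) 0) (hq : μ q ∈ Set.Ioo (-(3 * δ)) 0) (hl : 0 ≤ μ l) :
    l ∈ Set.Ioo p q := by
  have δ_nonneg : 0 ≤ δ := by linarith [hp.1, hp.2]
  have hpl : p ≠ l := fun h ↦ hp.2.not_ge (h ▸ hl)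
  have hql : q ≠ l := fun h ↦ hq.2.not_ge (h ▸ hl)
  constructor
  · by_contra! hlp
    have := hμ.comp_rev.le_neg_three_mul_of_lt (fun k ↦ hδ k.rev) δ_nonneg
      (Fin.rev_lt_rev.mpr hpq) (Fin.rev_lt_rev.mpr (lt_of_le_of_ne hlp hpl.symm))
      (by simpa using hp.2) (by simpa using hl)
    simp only [Function.comp_apply, Fin.rev_rev] at this
    exact this.not_gt hq.1
  · by_contra! hlq
    have := hμ.le_neg_three_mul_of_lt hδ δ_nonneg hpq (lt_of_le_of_ne hlq hql) hq.2 hl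
    exact this.not_gt hp.1

lemma eq_or_eq_or_eq_of_mem_Ioo {p q r l : Fin K} (hp : μ p ∈ Set.Ioo (-(3 * δ)) 0)
    (hq : μ q ∈ Set.Ioo (-(3 * δ)) 0) (hr : μ r ∈ Set.Ioo (-(3 * δ)) 0) (hl : 0 ≤ μ l) :
    p = q ∨ p = r ∨ q = r := by
  have separated : ∀ {i j : Fin K}, μ i ∈ Set.Ioo (-(3 * δ)) 0 → μ j ∈ Set.Ioo (-(3 * δ)) 0 →
      i < j → i < l ∧ l < j := fun hi hj hij ↦ hμ.mem_Ioo_of_neg_of_nonneg hδ hij hi hj hl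
  have hpq := separated hp hq
  have hqp := separated hq hp
  have hpr := separated hp hr
  have hrp := separated hr hp
  have hqr := separated hq hr
  have hrq := separated hr hq
  omega

lemma prev_neg_or_next_neg {a : Fin K} (ha : μ a = δ) (hfirst : ∀ k < a, |μ k| ≠ δ) :
    (∀ k : Fin K, (a : ℕ) = k + 1 → μ k < 0) ∨ (∀ k : Fin K, (k : ℕ) = a + 1 → μ k < 0) := by
  refine or_iff_not_imp_left.mpr fun h k hk ↦ ?_
  push Not at h
  obtain ⟨j, hja, hj⟩ := h
  have hj_ne := hfirst j (by omega)
  rw [abs_of_nonneg hj] at hj_ne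
  have lt_hj : δ < μ j := lt_of_le_of_ne (abs_of_nonneg hj ▸ hδ j) hj_ne.symm
  by_contra! hk_nonneg
  linarith [hμ.add_le_two_mul hja hk, hδ k, abs_of_nonneg hk_nonneg]

end Slope
end ConcaveSeq

/-- Two alternatives to the sequence `M` of centred means `μ k - τ` that are hard to tell apart:
both are concave with gaps comparable to those of `M`, their arms are `3 * δ`-close, and yet some
arm is labelled differently. -/
structure IsConfusingPair {K : ℕ} (M : Fin K → ℝ) (δ : ℝ) (A B : Fin K → ℝ) : Prop where
  concave_left : ConcaveSeq A
  concave_right : ConcaveSeq B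
  gap_left : ∀ k, |A k| ∈ Set.Icc (|M k| / 10) (3 * |M k|)
  gap_right : ∀ k, |B k| ∈ Set.Icc (|M k| / 10) (3 * |M k|)
  dist_le : ∀ k, |A k - B k| ≤ 3 * δ
  exists_neg_nonneg : ∃ j, A j < 0 ∧ 0 ≤ B j

section Pair

variable {K : ℕ} {M : Fin K → ℝ} {δ : ℝ}

lemma IsConfusingPair.comp_rev {A B : Fin K → ℝ} (h : IsConfusingPair (M ∘ Fin.rev) δ A B) :
    IsConfusingPair M δ (A ∘ Fin.rev) (B ∘ Fin.rev) where
  concave_left := h.concave_left.comp_rev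
  concave_right := h.concave_right.comp_rev
  gap_left k := by simpa using h.gap_left k.rev
  gap_right k := by simpa using h.gap_right k.rev
  dist_le k := h.dist_le k.rev
  exists_neg_nonneg := by
    obtain ⟨j, hA, hB⟩ := h.exists_neg_nonneg
    exact ⟨j.rev, by simpa using hA, by simpa using hB⟩

/-- The sequence `M` lowered by `c * δ` at the arm `a`, the amount decreasing by `δ / 2` per arm, so
that it eventually vanishes to the right of `a` and grows without bound to the left. -/
noncomputable def tiltSeq (M : Fin K → ℝ) (δ : ℝ) (a : Fin K) (c : ℝ) (k : Fin K) : ℝ :=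
  M k + min (δ * (((k : ℝ) - a) / 2 - c)) 0

lemma ConcaveSeq.tiltSeq (hM : ConcaveSeq M) (δ : ℝ) (a : Fin K) (c : ℝ) :
    ConcaveSeq (tiltSeq M δ a c) := by
  refine hM.add (ConcaveSeq.inf ?_ (.const 0))
  convert ConcaveSeq.affine (K := K) (δ / 2) (-(δ * (a / 2 + c))) using 2
  ring

lemma tiltSeq_self (hδ : 0 ≤ δ) {a : Fin K} (ha : M a = δ) {c : ℝ} (hc : 0 ≤ c) :
    tiltSeq M δ a c a = δ * (1 - c) := by
  have : δ * (0 - c) ≤ 0 := mul_nonpos_of_nonneg_of_nonpos hδ (by linarith)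
  rw [tiltSeq, sub_self, zero_div, min_eq_left this, ha]
  ring

lemma abs_tiltSeq_sub_tiltSeq_le (M : Fin K → ℝ) (δ : ℝ) (a : Fin K) (c c' : ℝ) (k : Fin K) :
    |tiltSeq M δ a c k - tiltSeq M δ a c' k| ≤ |δ * (c' - c)| := by
  rw [tiltSeq, tiltSeq, add_sub_add_left_eq_sub]
  refine (abs_min_sub_min_le_max _ _ _ _).trans_eq ?_
  rw [sub_self, abs_zero, max_eq_left (abs_nonneg _)]
  ring_nf

lemma abs_add_mem_Icc_of_small {x g : ℝ} (hx : δ ≤ |x|) (hg : g ≤ 0)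
    (hgδ : -(9 / 10 * δ) ≤ g) : |x + g| ∈ Set.Icc (|x| / 10) (3 * |x|) := by
  rcases abs_cases x with ⟨hx', _⟩ | ⟨hx', _⟩ <;>
    rcases abs_cases (x + g) with ⟨hg', _⟩ | ⟨hg', _⟩ <;> constructor <;> linarith

lemma abs_add_mem_Icc_of_neg {x g : ℝ} (hx : x ≤ 0) (hg : g ≤ 0) (hgx : 2 * x ≤ g) :
    |x + g| ∈ Set.Icc (|x| / 10) (3 * |x|) := by
  rw [abs_of_nonpos hx, abs_of_nonpos (by linarith)]
  constructor <;> linarith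

lemma abs_tiltSeq_mem_Icc (hδ_pos : 0 < δ) (hδ : ∀ k, δ ≤ |M k|) {a k : Fin K} (hka : k ≠ a)
    (hleft : k < a → M k ≤ δ - 2 * δ * ((a : ℝ) - k)) {c : ℝ} (hc : c ≤ 5 / 4) :
    |tiltSeq M δ a c k| ∈ Set.Icc (|M k| / 10) (3 * |M k|) := by
  rcases lt_or_gt_of_ne hka with hlt | hgt
  · have succ_le : (k : ℝ) + 1 ≤ a := by exact_mod_cast hlt
    have hMk := hleft hlt
    refine abs_add_mem_Icc_of_neg (by nlinarith) (min_le_right _ _) (le_min ?_ ?_) <;> nlinarith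
  · have succ_le : (a : ℝ) + 1 ≤ k := by exact_mod_cast hgt
    refine abs_add_mem_Icc_of_small (hδ k) (min_le_right _ _) (le_min ?_ ?_) <;> nlinarith

-- The second alternative is `tiltSeq M δ a 0` rather than `M`, which is not uniformly close to the
-- first one on the left of `a`.
lemma IsConfusingPair.tilt (hM : ConcaveSeq M) (hδ_pos : 0 < δ) (hδ : ∀ k, δ ≤ |M k|)
    {a : Fin K} (ha : M a = δ) (hprev : ∀ k : Fin K, (a : ℕ) = k + 1 → M k < 0) :
    IsConfusingPair M δ (tiltSeq M δ a (5 / 4)) (tiltSeq M δ a 0) := by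
  have hleft : ∀ k < a, M k ≤ δ - 2 * δ * ((a : ℝ) - k) := by
    intro k hk
    let b : Fin K := ⟨a - 1, by omega⟩
    have hab : (a : ℕ) = b + 1 := by simp only [b]; omega
    have hb := hprev b hab
    have cast_a : (a : ℝ) = b + 1 := by exact_mod_cast hab
    rw [cast_a]
    linarith [hM.le_sub_of_neg_of_nonneg hδ (show k ≤ b by omega) (show b < a by omega) hb
      (ha ▸ hδ_pos.le), hδ b, abs_of_neg hb]
  have gap : ∀ c : ℝ, 0 ≤ c → c ≤ 5 / 4 → 1 / 10 ≤ |1 - c| → |1 - c| ≤ 3 → ∀ k,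
      |tiltSeq M δ a c k| ∈ Set.Icc (|M k| / 10) (3 * |M k|) := by
    intro c hc hc' hge hle k
    rcases eq_or_ne k a with rfl | hka
    · rw [tiltSeq_self hδ_pos.le ha hc, ha, abs_mul, abs_of_pos hδ_pos]
      constructor <;> nlinarith
    · exact abs_tiltSeq_mem_Icc hδ_pos hδ hka (hleft k) hc'
  exact
    { concave_left := hM.tiltSeq δ a _
      concave_right := hM.tiltSeq δ a _
      gap_left := gap (5 / 4) (by norm_num) le_rfl (by norm_num) (by norm_num)
      gap_right := gap 0 le_rfl (by norm_num) (by norm_num) (by norm_num)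
      dist_le := fun k ↦ (abs_tiltSeq_sub_tiltSeq_le M δ a _ _ k).trans <| by
        rw [abs_mul, abs_of_pos hδ_pos]
        norm_num
        linarith
      exists_neg_nonneg := ⟨a, by rw [tiltSeq_self hδ_pos.le ha (by norm_num)]; linarith,
        by rw [tiltSeq_self hδ_pos.le ha le_rfl]; linarith⟩ }

lemma exists_isConfusingPair_of_pos (hM : ConcaveSeq M) (hδ_pos : 0 < δ) (hδ : ∀ k, δ ≤ |M k|)
    {a : Fin K} (ha : M a = δ) (hfirst : ∀ k < a, |M k| ≠ δ) :
    ∃ A B, IsConfusingPair M δ A B := by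
  rcases hM.prev_neg_or_next_neg hδ ha hfirst with hprev | hnext
  · exact ⟨_, _, .tilt hM hδ_pos hδ ha hprev⟩
  · refine ⟨_, _, (IsConfusingPair.tilt hM.comp_rev hδ_pos (fun k ↦ hδ k.rev) (a := a.rev)
      (by simpa using ha) fun k hk ↦ hnext k.rev ?_).comp_rev⟩
    simp only [Fin.val_rev] at hk ⊢
    omega

lemma IsConfusingPair.shift (hM : ConcaveSeq M) (hδ : ∀ k, δ ≤ |M k|) {a : Fin K} (ha : M a < 0)
    {c : ℝ} (hac : 0 ≤ M a + c) (hc : c ≤ 2 * δ) (hgap : ∀ k, M k < 0 → |M k| / 10 ≤ |M k + c|) :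
    IsConfusingPair M δ M fun k ↦ M k + c where
  concave_left := hM
  concave_right := hM.add (.const c)
  gap_left k := by constructor <;> linarith [abs_nonneg (M k)]
  gap_right k := by
    rcases lt_or_ge (M k) 0 with hk | hk
    · refine ⟨hgap k hk, abs_le.mpr ?_⟩
      have := hδ k
      rw [abs_of_neg hk] at this ⊢
      constructor <;> linarith
    · have := hδ k
      rw [abs_of_nonneg hk] at this ⊢
      rw [abs_of_nonneg (by linarith)]
      constructor <;> linarith
  dist_le k := by
    rw [sub_add_cancel_left, abs_neg, abs_of_nonneg (by linarith)]
    linarith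
  exists_neg_nonneg := ⟨a, ha, hac⟩

lemma exists_isConfusingPair_of_neg (hM : ConcaveSeq M) (hδ_pos : 0 < δ) (hδ : ∀ k, δ ≤ |M k|)
    {a l : Fin K} (ha : M a = -δ) (hl : 0 ≤ M l) : ∃ A B, IsConfusingPair M δ A B := by
  have ha_neg : M a < 0 := by linarith
  have exists_shift : (∀ k, M k < 0 → |M k| / 10 ≤ |M k + 3 / 2 * δ|) ∨
      ∀ k, M k < 0 → |M k| / 10 ≤ |M k + 2 * δ| := by
    by_contra! ⟨⟨p, hp, hp_close⟩, q, hq, hq_close⟩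
    rw [abs_of_neg hp, abs_lt] at hp_close
    rw [abs_of_neg hq, abs_lt] at hq_close
    rcases hM.eq_or_eq_or_eq_of_mem_Ioo hδ (p := p) (q := q) (r := a)
      ⟨by linarith, hp⟩ ⟨by linarith, hq⟩ ⟨by linarith, ha_neg⟩ hl with rfl | rfl | rfl <;>
      linarith
  rcases exists_shift with hgap | hgap
  · exact ⟨_, _, .shift hM hδ ha_neg (by linarith) (by linarith) hgap⟩
  · exact ⟨_, _, .shift hM hδ ha_neg (by linarith) le_rfl hgap⟩

lemma exists_isConfusingPair (hM : ConcaveSeq M) (hδ_pos : 0 < δ) (hδ : ∀ k, δ ≤ |M k|)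
    (hattained : ∃ a, |M a| = δ) (hl : ∃ l, 0 ≤ M l) : ∃ A B, IsConfusingPair M δ A B := by
  obtain ⟨a, ha, hfirst⟩ := wellFounded_lt.has_min {k | |M k| = δ} hattained
  obtain ⟨l, hl⟩ := hl
  rcases (abs_eq hδ_pos.le).mp ha with ha | ha
  · exact exists_isConfusingPair_of_pos hM hδ_pos hδ ha fun k hk h ↦ hfirst k h hk
  · exact exists_isConfusingPair_of_neg hM hδ_pos hδ ha hl

end Pair

/-- Problem dependent lower bound for the concave thresholding bandit problem
(Theorem 3, fixed-budget setting): for any strategy there is a Gaussian bandit problem with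
concave means whose gaps satisfy `Δ_k/10 ≤ |μ_k − τ| ≤ 3 Δ_k` on which the probability of
error is at least `(1/4) · exp(−9·T·Δ_min²/σ²)`. -/
theorem concave_lower_bound
    (K T : ℕ) (hK : 3 ≤ K) (hT : 1 ≤ T) (σ τ : ℝ) (hσ : 0 < σ)
    (Δ : Fin K → ℝ) (hΔ : ∀ k, 0 < Δ k)
    (hfeas : ∃ m : Fin K → ℝ, ConcaveSeq m ∧ (∀ k, |m k - τ| = Δ k) ∧ ∃ l, τ ≤ m l)
    (π : (t : ℕ) → (Fin t → ℝ) → Fin K) (hπ : ∀ t, Measurable (π t))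
    (Qhat : (Fin T → ℝ) → Fin K → Bool) (hQhat : Measurable Qhat) :
    ∃ μ : Fin K → ℝ, ConcaveSeq μ ∧
      (∀ k, Δ k / 10 ≤ |μ k - τ| ∧ |μ k - τ| ≤ 3 * Δ k) ∧
      ENNReal.ofReal ((1 / 4) * Real.exp (-9 * (T : ℝ) * (⨅ k, Δ k) ^ 2 / σ ^ 2)) ≤
        histMeasure (fun k => gaussianReal (μ k) ⟨σ ^ 2, sq_nonneg σ⟩) π T
          (errSet Qhat μ τ) := by
  obtain ⟨m, hm, hmΔ, l, hl⟩ := hfeas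
  have : Nonempty (Fin K) := ⟨l⟩
  obtain ⟨a, ha⟩ := exists_eq_ciInf_of_finite (f := Δ)
  have hδ_le : ∀ k, (⨅ k, Δ k) ≤ |m k - τ| := fun k ↦
    (hmΔ k).symm ▸ ciInf_le (Set.finite_range Δ).bddBelow k
  obtain ⟨A, B, h⟩ := exists_isConfusingPair (M := fun k ↦ m k - τ) (hm.add (.const (-τ)))
    (ha ▸ hΔ a) hδ_le ⟨a, (hmΔ a).trans ha⟩ ⟨l, sub_nonneg.mpr hl⟩
  obtain ⟨j, hA, hB⟩ := h.exists_neg_nonneg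
  have gaps : ∀ {F : Fin K → ℝ}, (∀ k, |F k| ∈ Set.Icc (|m k - τ| / 10) (3 * |m k - τ|)) →
      ∀ k, Δ k / 10 ≤ |F k + τ - τ| ∧ |F k + τ - τ| ≤ 3 * Δ k := by
    intro F hF k
    simpa [hmΔ k] using hF k
  have hv : (⟨σ ^ 2, sq_nonneg σ⟩ : ℝ≥0) ≠ 0 := NNReal.coe_ne_zero.mp (sq_pos_of_pos hσ).ne'
  have exponent : -9 * (T : ℝ) * (⨅ k, Δ k) ^ 2 / σ ^ 2 =
      -(T * ((3 * ⨅ k, Δ k) ^ 2 / σ ^ 2)) := by ring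
  rw [exponent]
  rcases le_histMeasure_errSet_or_le_histMeasure_errSet (μ := fun k ↦ A k + τ)
    (μ' := fun k ↦ B k + τ) hv hπ hQhat (by simpa using h.dist_le) (add_lt_of_neg_left τ hA)
    (le_add_of_nonneg_left hB) with hlb | hlb
  · exact ⟨_, h.concave_left.add (.const τ), gaps h.gap_left, hlb⟩
  · exact ⟨_, h.concave_right.add (.const τ), gaps h.gap_right, hlb⟩
end
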